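/- arXiv:0910.4928 — 5 statements merged into one kernel-verified Lean document; each statement's English description precedes it below -/
import Mathlib

section
/- Let $K$ be a field and let $L_1,\dots,L_s$ be distinct lines in the projective plane $\mathbb{P}^2(K)$ such that no point of $\mathbb{P}^2(K)$ lies on all of them. Let $r$ be the number of singular points of the arrangement, i.e., points lying on at least two of the lines. Then $r \geq s$. -/
/-!
Keep the lines, but only the singular points. Two lines still meet in exactly one point, and the
resulting configuration is nondegenerate: given a line `l`, some line `m` differs from it, some line
`k` misses the point `l ∩ m`, and then `m ∩ k` is a singular point off `l`. For a nondegenerate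
finite configuration in which any two lines meet, the de Bruijn–Erdős inequality is
`Configuration.HasPoints.card_le`.
-/

open Module
open scoped LinearAlgebra.Projectivization

section Arrangement

variable {P ι : Type*} {ℓ : ι → Set P}

/-- The singular points of an arrangement of lines, each line being given by its set of points:
the points on at least two of the lines. Lines are distinguished by their index, so a repeated line
would count twice. -/
def singularPoints (ℓ : ι → Set P) : Set P :=
  {p | ∃ i j, i ≠ j ∧ p ∈ ℓ i ∧ p ∈ ℓ j}

theorem finite_singularPoints [Finite ι]
    (hmeet : Pairwise fun i j ↦ (ℓ i ∩ ℓ j).Subsingleton) : (singularPoints ℓ).Finite := by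
  have hfinite : (⋃ i, ⋃ j, ⋃ _ : i ≠ j, ℓ i ∩ ℓ j).Finite :=
    Set.finite_iUnion fun _ ↦ Set.finite_iUnion fun _ ↦ Set.finite_iUnion fun hij ↦
      (hmeet hij).finite
  refine hfinite.subset ?_
  rintro p ⟨i, j, hij, hpi, hpj⟩
  simp only [Set.mem_iUnion]
  exact ⟨i, j, hij, hpi, hpj⟩

theorem exists_mem_singularPoints_notMem
    (hmeet : Pairwise fun i j ↦ ∃! p, p ∈ ℓ i ∩ ℓ j) (hcommon : ∀ p, ∃ i, p ∉ ℓ i)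
    {i : ι} (hi : (ℓ i).Nonempty) : ∃ p ∈ singularPoints ℓ, p ∉ ℓ i := by
  obtain ⟨p, hpi⟩ := hi
  obtain ⟨j, hpj⟩ := hcommon p
  have hij : i ≠ j := fun h ↦ hpj (h ▸ hpi)
  obtain ⟨q, ⟨_, hqj⟩, hq_unique⟩ := hmeet hij
  obtain ⟨k, hqk⟩ := hcommon q
  have hjk : j ≠ k := fun h ↦ hqk (h ▸ hqj)
  obtain ⟨r, ⟨hrj, hrk⟩, -⟩ := hmeet hjk
  refine ⟨r, ⟨j, k, hjk, hrj, hrk⟩, fun hri ↦ hqk ?_⟩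
  exact hq_unique r ⟨hri, hrj⟩ ▸ hrk

theorem card_le_ncard_singularPoints [Finite ι] (hne : ∀ i, (ℓ i).Nonempty)
    (hmeet : Pairwise fun i j ↦ ∃! p, p ∈ ℓ i ∩ ℓ j) (hcommon : ∀ p, ∃ i, p ∉ ℓ i) :
    Nat.card ι ≤ (singularPoints ℓ).ncard := by
  have hsub : Pairwise fun i j ↦ (ℓ i ∩ ℓ j).Subsingleton :=
    fun _ _ hij _ hp _ hq ↦ (hmeet hij).unique hp hq
  have := Fintype.ofFinite ι
  have := (finite_singularPoints hsub).fintype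
  have hoff : ∀ i, ∃ p ∈ singularPoints ℓ, p ∉ ℓ i := fun i ↦
    exists_mem_singularPoints_notMem hmeet hcommon (hne i)
  choose meet hmeet_mem _ using @hmeet
  let : Membership (singularPoints ℓ) ι := ⟨fun i p ↦ (p : P) ∈ ℓ i⟩
  let : Configuration.HasPoints (singularPoints ℓ) ι :=
    { exists_point i := by
        obtain ⟨p, hp, hpi⟩ := hoff i
        exact ⟨⟨p, hp⟩, hpi⟩
      exists_line p := hcommon p
      eq_or_eq {p q i j} hpi hqi hpj hqj :=
        or_iff_not_imp_right.2 fun hij ↦ Subtype.ext (hsub hij ⟨hpi, hpj⟩ ⟨hqi, hqj⟩)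
      mkPoint {i j} hij := ⟨meet hij, i, j, hij, hmeet_mem hij⟩
      mkPoint_ax hij := hmeet_mem hij }
  simpa only [← Nat.card_coe_set_eq, Nat.card_eq_fintype_card] using
    Configuration.HasPoints.card_le (singularPoints ℓ) ι

end Arrangement

section Projectivization

variable {K V : Type*} [DivisionRing K] [AddCommGroup V] [Module K V]

theorem finrank_inf_of_finrank_eq_succ {n : ℕ} (hV : finrank K V = n + 2) {A B : Submodule K V}
    (hA : finrank K A = n + 1) (hB : finrank K B = n + 1) (hAB : A ≠ B) :
    finrank K (A ⊓ B : Submodule K V) = n := by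
  have : FiniteDimensional K V := .of_finrank_pos (by omega)
  have hlt : A < A ⊔ B := left_lt_sup.2 fun hBA ↦
    hAB (Submodule.eq_of_le_of_finrank_eq hBA (hB.trans hA.symm)).symm
  have hsup_gt := Submodule.finrank_lt_finrank_of_lt hlt
  have hsup_le := Submodule.finrank_le (A ⊔ B)
  have hsum := Submodule.finrank_sup_add_finrank_inf_eq A B
  omega

theorem exists_projectivization_submodule_le {W : Submodule K V} (hW : W ≠ ⊥) :
    ∃ p : ℙ K V, p.submodule ≤ W := by
  obtain ⟨v, hvW, hv⟩ := W.exists_mem_ne_zero_of_ne_bot hW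
  exact ⟨.mk K v hv, (Submodule.span_singleton_le_iff_mem v W).2 hvW⟩

theorem existsUnique_projectivization_submodule_le {W : Submodule K V} (hW : finrank K W = 1) :
    ∃! p : ℙ K V, p.submodule ≤ W := by
  have : FiniteDimensional K W := .of_finrank_pos (by omega)
  refine ⟨.mk'' W hW, (Projectivization.submodule_mk'' W hW).le, fun q hq ↦ ?_⟩
  apply Projectivization.submodule_injective
  rw [Projectivization.submodule_mk'']
  exact Submodule.eq_of_le_of_finrank_eq hq (q.finrank_submodule.trans hW.symm)

theorem stmt_2_general {ι : Type*} [Finite ι] (hV : finrank K V = 3) (L : ι → Submodule K V)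
    (hdim : ∀ i, finrank K (L i) = 2) (hinj : Function.Injective L)
    (hnocommon : ¬ ∃ p : ℙ K V, ∀ i, p.submodule ≤ L i) :
    Nat.card ι ≤ Set.ncard {p : ℙ K V |
      ∃ i j, i ≠ j ∧ p.submodule ≤ L i ∧ p.submodule ≤ L j} := by
  refine card_le_ncard_singularPoints (ℓ := fun i ↦ {p : ℙ K V | p.submodule ≤ L i})
    (fun i ↦ ?nonempty) (fun i j hij ↦ ?meet) ?noCommonPoint
  case nonempty =>
    have hLi : L i ≠ ⊥ := by
      intro hbot
      have hfinrank := hdim i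
      rw [hbot, finrank_bot] at hfinrank
      omega
    exact exists_projectivization_submodule_le hLi
  case meet =>
    have hinf : finrank K (L i ⊓ L j : Submodule K V) = 1 :=
      finrank_inf_of_finrank_eq_succ hV (hdim i) (hdim j) (hinj.ne hij)
    simpa only [Set.mem_inter_iff, Set.mem_ofPred_eq, le_inf_iff] using
      existsUnique_projectivization_submodule_le hinf
  case noCommonPoint => simpa only [Set.mem_ofPred_eq, not_exists, not_forall] using hnocommon

end Projectivization

/-- de Bruijn–Erdős: given s distinct lines in ℙ²(K)
(2-dimensional subspaces of K³) with no common point, the number r of singular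
points of the arrangement (points lying on at least two of the lines) satisfies
r ≥ s. -/
theorem stmt_2 (K : Type*) [Field K] (s : ℕ)
    (L : Fin s → Submodule K (Fin 3 → K))
    (hdim : ∀ i, Module.finrank K (L i) = 2)
    (hinj : Function.Injective L)
    (hnocommon : ¬ ∃ p : Projectivization K (Fin 3 → K), ∀ i, p.submodule ≤ L i) :
    s ≤ Set.ncard {p : Projectivization K (Fin 3 → K) |
      ∃ i j, i ≠ j ∧ p.submodule ≤ L i ∧ p.submodule ≤ L j} := by
  simpa only [Nat.card_fin] using stmt_2_general (finrank_fin_fun K) L hdim hinj hnocommon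
end

section
/- Fix integers $d \geq 2$, $m \geq 1$, $e \geq 1$. There exists a constant $M > 0$, independent of $p$, such that for every prime $p$ and every subset $F \subseteq \mathbb{Z}/p\mathbb{Z}$, the number of positive solutions $(x_1,\dots,x_d,y_1,\dots,y_m)$ of the equation $E(p)$ for which the residue class $-\,x_1^{-1} x_2 \in \mathbb{Z}/p\mathbb{Z}$ belongs to $F$ is at most $M \cdot |F| \cdot p^{\,d+m-2}$. -/
/-!
The ratio `-x₁⁻¹ x₂` together with `x₁` determines `x₂` modulo `p`, hence exactly, because every
coordinate of a positive solution is smaller than `p`. The linear equation then recovers any one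
further coordinate. So a solution is determined by its ratio and by all but two of its coordinates:
at most `|F|` choices for the former and fewer than `p` for each of the latter.
-/

section PositiveSolutions

variable {ι : Type*} [Fintype ι]

/-- The positive solutions `x` of the linear equation `∑ i, a i * x i = n`. The equation `E(p)` is
the case where the index type is `Fin d ⊕ Fin m`, the weights are `e` on the left summand and `1` on
the right one, and `n = p`. -/
def positiveSolutions (a : ι → ℕ) (n : ℕ) : Set (ι → ℕ) :=
  {x | (∀ i, 0 < x i) ∧ ∑ i, a i * x i = n}

theorem lt_of_mem_positiveSolutions [Nontrivial ι] {a x : ι → ℕ} {n : ℕ} (ha : ∀ i, 0 < a i)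
    (hx : x ∈ positiveSolutions a n) (i : ι) : x i < n := by
  obtain ⟨hpos, hsum⟩ := hx
  obtain ⟨j, hji⟩ := exists_ne i
  calc
    x i ≤ a i * x i := Nat.le_mul_of_pos_left _ (ha i)
    _ < ∑ k, a k * x k :=
      Finset.single_lt_sum (f := fun k => a k * x k) hji (Finset.mem_univ i)
        (Finset.mem_univ j) (Nat.mul_pos (ha j) (hpos j)) fun _ _ _ => Nat.zero_le _
    _ = n := hsum

theorem eq_of_sum_mul_eq_of_forall_ne {R : Type*} [NonUnitalNonAssocSemiring R]
    [IsRightCancelAdd R] [IsLeftCancelMulZero R] {a x y : ι → R} {k : ι} (hk : a k ≠ 0)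
    (hsum : ∑ i, a i * x i = ∑ i, a i * y i) (hxy : ∀ i, i ≠ k → x i = y i) : x = y := by
  classical
  have hrest : ∑ i ∈ {k}ᶜ, a i * x i = ∑ i ∈ {k}ᶜ, a i * y i :=
    Finset.sum_congr rfl fun i hi => by rw [hxy i (by simpa using hi)]
  rw [Fintype.sum_eq_add_sum_compl k, Fintype.sum_eq_add_sum_compl k, hrest] at hsum
  have hxk : x k = y k := mul_left_cancel₀ hk (add_right_cancel hsum)
  funext i
  obtain rfl | hi := eq_or_ne i k
  exacts [hxk, hxy i hi]

variable {K : Type*} [DivisionRing K]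

theorem eq_of_neg_inv_mul_natCast_eq {n r s t : ℕ}
    (hcast : Set.InjOn (Nat.cast : ℕ → K) (Set.Iio n)) (hr : 0 < r) (hrn : r < n) (hsn : s < n)
    (htn : t < n) (h : -(r : K)⁻¹ * s = -(r : K)⁻¹ * t) : s = t := by
  have hr₀ : (r : K) ≠ 0 := fun h₀ => hr.ne' (hcast hrn (hr.trans hrn) (by rw [h₀, Nat.cast_zero]))
  exact hcast hsn htn (mul_left_cancel₀ (neg_ne_zero.mpr (inv_ne_zero hr₀)) h)

theorem eq_of_mem_positiveSolutions_of_neg_inv_mul_eq {a x y : ι → ℕ} {n : ℕ} {i₀ i₁ k : ι}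
    (hcast : Set.InjOn (Nat.cast : ℕ → K) (Set.Iio n)) (ha : ∀ i, 0 < a i)
    (h₀₁ : i₀ ≠ i₁) (h₀k : i₀ ≠ k) (hx : x ∈ positiveSolutions a n)
    (hy : y ∈ positiveSolutions a n)
    (hratio : -(x i₀ : K)⁻¹ * x i₁ = -(y i₀ : K)⁻¹ * y i₁)
    (hxy : ∀ i, i ≠ i₁ → i ≠ k → x i = y i) : x = y := by
  have : Nontrivial ι := ⟨i₀, i₁, h₀₁⟩
  have hx_lt := lt_of_mem_positiveSolutions ha hx
  have hy_lt := lt_of_mem_positiveSolutions ha hy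
  have heq₁ : x i₁ = y i₁ := by
    rw [← hxy i₀ h₀₁ h₀k] at hratio
    exact eq_of_neg_inv_mul_natCast_eq hcast (hx.1 i₀) (hx_lt i₀) (hx_lt i₁) (hy_lt i₁) hratio
  refine eq_of_sum_mul_eq_of_forall_ne (ha k).ne' (hx.2.trans hy.2.symm) fun i hik => ?_
  obtain rfl | hi₁ := eq_or_ne i i₁
  exacts [heq₁, hxy i hi₁ hik]

theorem ncard_positiveSolutions_neg_inv_mul_mem_le {a : ι → ℕ} {n : ℕ} {i₀ i₁ : ι}
    (hcast : Set.InjOn (Nat.cast : ℕ → K) (Set.Iio n)) (ha : ∀ i, 0 < a i) (h₀₁ : i₀ ≠ i₁)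
    (hι : 2 < Fintype.card ι) (F : Finset K) :
    {x ∈ positiveSolutions a n | -(x i₀ : K)⁻¹ * x i₁ ∈ F}.ncard ≤
      F.card * n ^ (Fintype.card ι - 2) := by
  classical
  have : Nontrivial ι := ⟨i₀, i₁, h₀₁⟩
  obtain ⟨k, hk₀, hk₁⟩ : ∃ k, k ≠ i₀ ∧ k ≠ i₁ :=
    ENat.exists_ne_ne_of_three_le (by simpa using mod_cast hι) i₀ i₁
  let rest : Finset ι := {i₁, k}ᶜ
  let codes : Finset (K × (rest → ℕ)) := F ×ˢ Fintype.piFinset fun _ => Finset.range n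
  have hcodes : codes.card = F.card * n ^ (Fintype.card ι - 2) := by
    simp only [codes, rest, Finset.card_product, Fintype.card_piFinset, Finset.card_range,
      Finset.prod_const, Finset.card_univ, Fintype.card_coe, Finset.card_compl,
      Finset.card_pair hk₁.symm]
  rw [← hcodes, ← Set.ncard_coe_finset]
  refine Set.ncard_le_ncard_of_injOn (fun x => (-(x i₀ : K)⁻¹ * x i₁, fun i => x i)) ?_ ?_
  · rintro x ⟨hx, hxF⟩
    refine Finset.mem_coe.mpr (Finset.mk_mem_product hxF (Fintype.mem_piFinset.mpr fun i => ?_))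
    exact Finset.mem_range.mpr (lt_of_mem_positiveSolutions ha hx i)
  · rintro x ⟨hx, -⟩ y ⟨hy, -⟩ hxy
    obtain ⟨hratio, hrest⟩ := Prod.mk.inj hxy
    exact eq_of_mem_positiveSolutions_of_neg_inv_mul_eq hcast ha h₀₁ hk₀.symm hx hy hratio
      fun i hi₁ hik => congrFun hrest ⟨i, by simp [rest, hi₁, hik]⟩

end PositiveSolutions

theorem sumElim_mem_positiveSolutions_iff {ι κ : Type*} [Fintype ι] [Fintype κ] {e n : ℕ}
    {x : ι → ℕ} {y : κ → ℕ} :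
    Sum.elim x y ∈ positiveSolutions (Sum.elim (fun _ => e) fun _ => 1) n ↔
      (∀ i, 0 < x i) ∧ (∀ j, 0 < y j) ∧ e * (∑ i, x i) + ∑ j, y j = n := by
  simp [positiveSolutions, Finset.mul_sum, and_assoc]

theorem ncard_setOf_sumElim_mem {ι κ α : Type*} (S : Set (ι ⊕ κ → α)) :
    {xy : (ι → α) × (κ → α) | Sum.elim xy.1 xy.2 ∈ S}.ncard = S.ncard :=
  let e := (Equiv.sumArrowEquivProdArrow ι κ α).symm
  Set.ncard_preimage_of_injective_subset_range e.injective
    (e.surjective.range_eq ▸ Set.subset_univ S)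

theorem stmt_4_general {ι κ K : Type*} [Fintype ι] [Fintype κ] [DivisionRing K] {e n : ℕ}
    {i₀ i₁ : ι} (hcast : Set.InjOn (Nat.cast : ℕ → K) (Set.Iio n)) (he : 0 < e) (h₀₁ : i₀ ≠ i₁)
    (hικ : 2 < Fintype.card ι + Fintype.card κ) (F : Finset K) :
    {xy : (ι → ℕ) × (κ → ℕ) | (∀ i, 0 < xy.1 i) ∧ (∀ j, 0 < xy.2 j) ∧
        e * (∑ i, xy.1 i) + ∑ j, xy.2 j = n ∧ -(xy.1 i₀ : K)⁻¹ * xy.1 i₁ ∈ F}.ncard ≤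
      F.card * n ^ (Fintype.card ι + Fintype.card κ - 2) := by
  have hweights : ∀ i : ι ⊕ κ, 0 < Sum.elim (fun _ => e) (fun _ => 1) i :=
    Sum.rec (fun _ => he) fun _ => one_pos
  have hcount := ncard_positiveSolutions_neg_inv_mul_mem_le hcast hweights
    (Sum.inl_injective.ne h₀₁) (by rwa [Fintype.card_sum]) F
  rw [← ncard_setOf_sumElim_mem, Fintype.card_sum] at hcount
  simpa only [Set.mem_ofPred_eq, sumElim_mem_positiveSolutions_iff, Sum.elim_inl, and_assoc]
    using hcount

/-- Type I/II counting estimate: for fixed d ≥ 2, m ≥ 1, e ≥ 1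
there is a constant M > 0 such that for every prime p and every F ⊆ ℤ/pℤ, the
number of positive solutions (x₁,…,x_d,y₁,…,y_m) of
e(x₁+⋯+x_d) + (y₁+⋯+y_m) = p with -x₁⁻¹x₂ ∈ F is at most M·|F|·p^(d+m-2). -/
theorem stmt_4 (d m e : ℕ) (hd : 2 ≤ d) (hm : 1 ≤ m) (he : 1 ≤ e) :
    ∃ M : ℕ, 0 < M ∧ ∀ p : ℕ, p.Prime → ∀ F : Finset (ZMod p),
      Set.ncard {xy : (Fin d → ℕ) × (Fin m → ℕ) |
        (∀ i, 0 < xy.1 i) ∧ (∀ j, 0 < xy.2 j) ∧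
        e * (∑ i, xy.1 i) + (∑ j, xy.2 j) = p ∧
        -((xy.1 ⟨0, by omega⟩ : ℕ) : ZMod p)⁻¹ * ((xy.1 ⟨1, by omega⟩ : ℕ) : ZMod p) ∈ F}
      ≤ M * F.card * p ^ (d + m - 2) := by
  refine ⟨1, one_pos, fun p hp F => have := Fact.mk hp; ?_⟩
  simpa using stmt_4_general (κ := Fin m) (CharP.natCast_injOn_Iio (ZMod p) p) he
    (Fin.ne_of_val_ne zero_ne_one) (by simp only [Fintype.card_fin]; omega) F
end

section
/- Fix integers $d \geq 1$, $m \geq 2$, $e \geq 1$. There exists a constant $M > 0$, independent of $p$, such that for every prime $p$ and every subset $F \subseteq \mathbb{Z}/p\mathbb{Z}$, the number of positive solutions $(x_1,\dots,x_d,y_1,\dots,y_m)$ of the equation $E(p)$ for which the residue class $y_1^{-1}\,(x_1+\cdots+x_d) \in \mathbb{Z}/p\mathbb{Z}$ belongs to $F$ is at most $M \cdot |F| \cdot p^{\,d+m-2}$. -/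
/-!
Write `X` for the sum of the `x i`. Once `y j₀` and the residue of `(y j₀)⁻¹ * X` are known, so is
the residue of `X`, and `X` itself because `X < n`. Then `∑ j, y j = n - e * X` is known as well.
Hence one coordinate of `x` and one coordinate of `y`, other than `y j₀`, are determined by the
remaining `|ι| + |κ| - 2` coordinates, each less than `n`, and by the residue in `F`.
-/

open Finset

theorem eq_of_sum_eq_of_forall_ne {ι M : Type*} [Fintype ι] [AddCommMonoid M] [IsRightCancelAdd M]
    {f g : ι → M} (i₀ : ι) (hsum : ∑ i, f i = ∑ i, g i) (hne : ∀ i ≠ i₀, f i = g i) : f = g := by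
  classical
  have hi₀ : f i₀ = g i₀ := by
    rw [Fintype.sum_eq_add_sum_compl i₀ f, Fintype.sum_eq_add_sum_compl i₀ g,
      sum_congr rfl fun i hi => hne i (by simpa using hi)] at hsum
    exact add_right_cancel hsum
  funext i
  obtain rfl | hi := eq_or_ne i i₀
  exacts [hi₀, hne i hi]

theorem zmod_inv_mul_injective {n : ℕ} {u : ZMod n} (hu : IsUnit u) :
    Function.Injective (u⁻¹ * ·) :=
  (IsUnit.of_mul_eq_one u (ZMod.inv_mul_of_unit u hu)).mul_right_injective

section

variable {ι κ : Type*} [Fintype ι] [Fintype κ]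

/-- The pair `(x, y)` solves the equation `E(n)`, namely `e * ∑ i, x i + ∑ j, y j = n`, with `y`
positive. The entries of `x` may vanish. -/
structure IsSolution (e n : ℕ) (x : ι → ℕ) (y : κ → ℕ) : Prop where
  pos : ∀ j, 0 < y j
  eq : e * ∑ i, x i + ∑ j, y j = n

namespace IsSolution

variable {e n : ℕ} {x : ι → ℕ} {y : κ → ℕ}

theorem sum_lt [Nonempty κ] (he : 0 < e) (h : IsSolution e n x y) : ∑ i, x i < n :=
  calc ∑ i, x i ≤ e * ∑ i, x i := Nat.le_mul_of_pos_left _ he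
    _ < e * ∑ i, x i + ∑ j, y j :=
      Nat.lt_add_of_pos_right (sum_pos (fun j _ => h.pos j) univ_nonempty)
    _ = n := h.eq

theorem left_lt [Nonempty κ] (he : 0 < e) (h : IsSolution e n x y) (i : ι) : x i < n :=
  (single_le_sum (fun _ _ => Nat.zero_le _) (mem_univ i)).trans_lt (h.sum_lt he)

theorem right_lt [Nontrivial κ] (h : IsSolution e n x y) (j : κ) : y j < n := by
  obtain ⟨k, hk⟩ := exists_ne j
  calc y j < ∑ l, y l :=
        single_lt_sum hk (mem_univ j) (mem_univ k) (h.pos k) fun _ _ _ => Nat.zero_le _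
    _ ≤ e * ∑ i, x i + ∑ l, y l := Nat.le_add_left _ _
    _ = n := h.eq

end IsSolution

/-- The data that determine a solution `(x, y)` of `E(n)` with `y j₀` coprime to `n`: the residue
class `(y j₀)⁻¹ * ∑ i, x i` together with all coordinates except `x i₀` and `y j₁`. -/
def solutionData (n : ℕ) (i₀ : ι) (j₀ j₁ : κ) (xy : (ι → ℕ) × (κ → ℕ)) :
    ZMod n × ({i // i ≠ i₀} → ℕ) × ({j // j ≠ j₁} → ℕ) :=
  ((xy.2 j₀ : ZMod n)⁻¹ * ((∑ i, xy.1 i : ℕ) : ZMod n), fun i => xy.1 i, fun j => xy.2 j)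

theorem injOn_solutionData {e : ℕ} (he : 0 < e) (n : ℕ) (i₀ : ι) {j₀ j₁ : κ} (hj : j₀ ≠ j₁) :
    Set.InjOn (solutionData n i₀ j₀ j₁) {xy | IsSolution e n xy.1 xy.2 ∧ (xy.2 j₀).Coprime n} := by
  rintro ⟨x, y⟩ ⟨h, hcop⟩ ⟨x', y'⟩ ⟨h', -⟩ hdata
  have : Nonempty κ := ⟨j₀⟩
  simp only [solutionData, Prod.mk.injEq, funext_iff, Subtype.forall] at h h' hcop hdata
  obtain ⟨hratio, hx, hy⟩ := hdata
  have hsum_cast : ((∑ i, x i : ℕ) : ZMod n) = (∑ i, x' i : ℕ) := by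
    rw [← hy j₀ hj] at hratio
    exact zmod_inv_mul_injective ((ZMod.isUnit_iff_coprime _ _).mpr hcop) hratio
  have hsum_left : ∑ i, x i = ∑ i, x' i :=
    CharP.natCast_injOn_Iio (ZMod n) n (h.sum_lt he) (h'.sum_lt he) hsum_cast
  have hsum_right : ∑ j, y j = ∑ j, y' j :=
    Nat.add_left_cancel (h.eq.trans (hsum_left ▸ h'.eq.symm))
  rw [eq_of_sum_eq_of_forall_ne i₀ hsum_left hx, eq_of_sum_eq_of_forall_ne j₁ hsum_right hy]

theorem stmt_5_general [Nonempty ι] [Nontrivial κ] {e : ℕ} (he : 0 < e) (n : ℕ) (j₀ : κ)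
    (F : Finset (ZMod n)) :
    {xy : (ι → ℕ) × (κ → ℕ) | IsSolution e n xy.1 xy.2 ∧ (xy.2 j₀).Coprime n ∧
        (xy.2 j₀ : ZMod n)⁻¹ * ((∑ i, xy.1 i : ℕ) : ZMod n) ∈ F}.encard
      ≤ (#F * n ^ (Fintype.card ι + Fintype.card κ - 2) : ℕ) := by
  classical
  obtain ⟨i₀⟩ := ‹Nonempty ι›
  obtain ⟨j₁, hj⟩ := exists_ne j₀
  let T : Finset (ZMod n × ({i // i ≠ i₀} → ℕ) × ({j // j ≠ j₁} → ℕ)) :=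
    F ×ˢ Fintype.piFinset (fun _ => range n) ×ˢ Fintype.piFinset (fun _ => range n)
  have hT : #T = #F * n ^ (Fintype.card ι + Fintype.card κ - 2) := by
    have hι : 0 < Fintype.card ι := Fintype.card_pos_iff.mpr ⟨i₀⟩
    have hκ : 1 < Fintype.card κ := Fintype.one_lt_card
    have hexp : Fintype.card ι + Fintype.card κ - 2 =
        (Fintype.card ι - 1) + (Fintype.card κ - 1) := by omega
    simp [T, hexp, pow_add]
  rw [← hT, ← Set.encard_coe_eq_coe_finsetCard]
  refine Set.encard_le_encard_of_injOn (f := solutionData n i₀ j₀ j₁) ?_ ?_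
  · rintro xy ⟨hsol, -, hF⟩
    simp only [T, mem_coe, mem_product, Fintype.mem_piFinset, mem_range]
    exact ⟨hF, fun i => hsol.left_lt he i, fun j => hsol.right_lt j⟩
  · refine (injOn_solutionData he n i₀ hj.symm).mono ?_
    rintro xy ⟨hsol, hcop, -⟩
    exact ⟨hsol, hcop⟩

end

/-- Type III counting estimate: for fixed d ≥ 1, m ≥ 2, e ≥ 1
there is a constant M > 0 such that for every prime p and every F ⊆ ℤ/pℤ, the
number of positive solutions (x₁,…,x_d,y₁,…,y_m) of
e(x₁+⋯+x_d) + (y₁+⋯+y_m) = p with y₁⁻¹(x₁+⋯+x_d) ∈ F is at most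
M·|F|·p^(d+m-2). -/
theorem stmt_5 (d m e : ℕ) (hd : 1 ≤ d) (hm : 2 ≤ m) (he : 1 ≤ e) :
    ∃ M : ℕ, 0 < M ∧ ∀ p : ℕ, p.Prime → ∀ F : Finset (ZMod p),
      Set.ncard {xy : (Fin d → ℕ) × (Fin m → ℕ) |
        (∀ i, 0 < xy.1 i) ∧ (∀ j, 0 < xy.2 j) ∧
        e * (∑ i, xy.1 i) + (∑ j, xy.2 j) = p ∧
        ((xy.2 ⟨0, by omega⟩ : ℕ) : ZMod p)⁻¹ * ((∑ i, xy.1 i : ℕ) : ZMod p) ∈ F}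
      ≤ M * F.card * p ^ (d + m - 2) := by
  have : Nonempty (Fin d) := ⟨⟨0, hd⟩⟩
  have : Nontrivial (Fin m) := Fin.nontrivial_iff_two_le.mpr hm
  refine ⟨1, one_pos, fun p hp F => ?_⟩
  have hbound := stmt_5_general (ι := Fin d) he p (⟨0, by omega⟩ : Fin m) F
  simp only [Fintype.card_fin] at hbound
  rw [one_mul]
  refine (Set.encard_le_coe_iff_finite_ncard_le.mp ((Set.encard_le_encard ?_).trans hbound)).2
  rintro ⟨x, y⟩ ⟨-, hy, heq, hF⟩
  have hsol : IsSolution e p x y := ⟨hy, heq⟩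
  exact ⟨hsol, (Nat.coprime_of_lt_prime (hy _).ne' (hsol.right_lt _) hp).symm, hF⟩
end

section
/- Let $d \geq 3$, $g \geq 0$, $e \geq 1$, $\delta \geq 3$, $\tau$, and $\epsilon$ be integers with $\tau \geq e(d-1)+1$ and $1 \leq \epsilon \leq \delta - 2$, and let $k_1,\dots,k_\epsilon$ and $k_1^o,\dots,k_\epsilon^o$ be integers with $k_j \geq 2$, $k_j^o \geq 1$, and $k_j^o + 2k_j \leq 2d+1$ for all $j$. Then $(d-1)(2\delta + 4(g-1) - e) + \tau - \sum_{j=1}^{\epsilon} k_j^o - 2\sum_{j=1}^{\epsilon} k_j + 4\epsilon \;\geq\; \delta - 1 \;\geq\; 2$. -/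
/-!
Removing the `j`-th fiber lowers the first log Chern number by `ko j + 2 * k j - 4`, which is at
most `2 * d - 3`. Before any removal it is at least `(δ - 2) * (2 * d - 3) + (δ - 1)`, so
`δ - 2` fibers can be removed and `δ - 1` still remains.
-/

theorem sum_add_mul_sum_le_card_mul {ι R : Type*} [Semiring R] [PartialOrder R]
    [IsOrderedAddMonoid R] {s : Finset ι} {f g : ι → R} {b c : R}
    (h : ∀ i ∈ s, f i + c * g i ≤ b) :
    (∑ i ∈ s, f i) + c * (∑ i ∈ s, g i) ≤ s.card * b := by
  simpa only [Finset.sum_add_distrib, Finset.mul_sum, nsmul_eq_mul] using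
    Finset.sum_le_card_nsmul s _ b h

section LogChern

variable {R : Type*} [CommRing R] [LinearOrder R] [IsStrictOrderedRing R] {d g e τ δ : R}

theorem le_logChern_of_no_fiber_removed (hd : 1 ≤ d) (hg : 0 ≤ g) (hτ : e * (d - 1) + 1 ≤ τ) :
    (δ - 2) * (2 * d - 3) + (δ - 1) ≤ (d - 1) * (2 * δ + 4 * (g - 1) - e) + τ := by
  have genus_term_nonneg : 0 ≤ (d - 1) * g := mul_nonneg (sub_nonneg.2 hd) hg
  calc
    (δ - 2) * (2 * d - 3) + (δ - 1) = (d - 1) * (2 * δ - 4 - e) + (e * (d - 1) + 1) := by ring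
    _ ≤ (d - 1) * (2 * δ + 4 * (g - 1) - e) + τ := by linarith

theorem stmt_10_general {ι : Type*} {s : Finset ι} {k ko : ι → R}
    (hd : 3 ≤ 2 * d) (hg : 0 ≤ g) (hτ : e * (d - 1) + 1 ≤ τ) (hs : (s.card : R) ≤ δ - 2)
    (hkko : ∀ j ∈ s, ko j + 2 * k j ≤ 2 * d + 1) :
    δ - 1 ≤ (d - 1) * (2 * δ + 4 * (g - 1) - e) + τ
      - (∑ j ∈ s, ko j) - 2 * (∑ j ∈ s, k j) + 4 * s.card := by
  have before_removal :
      (δ - 2) * (2 * d - 3) + (δ - 1) ≤ (d - 1) * (2 * δ + 4 * (g - 1) - e) + τ :=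
    le_logChern_of_no_fiber_removed (by linarith) hg hτ
  have removal_loss :
      (∑ j ∈ s, ko j) + 2 * (∑ j ∈ s, k j) - 4 * s.card ≤ (δ - 2) * (2 * d - 3) :=
    calc
      (∑ j ∈ s, ko j) + 2 * (∑ j ∈ s, k j) - 4 * s.card
          ≤ s.card * (2 * d + 1) - 4 * s.card :=
        sub_le_sub_right (sum_add_mul_sum_le_card_mul hkko) _
      _ = s.card * (2 * d - 3) := by ring
      _ ≤ (δ - 2) * (2 * d - 3) := mul_le_mul_of_nonneg_right hs (sub_nonneg.2 hd)
  linarith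

end LogChern

/-- numerical content of c̄₁²(𝒜_{pΔ}) ≥ 2 in Corollary 6.2. -/
theorem stmt_10 (d g e τ δ : ℤ) (ε : ℕ) (k ko : Fin ε → ℤ)
    (hd : 3 ≤ d) (hg : 0 ≤ g) (he : 1 ≤ e) (hδ : 3 ≤ δ)
    (hτ : e * (d - 1) + 1 ≤ τ)
    (hε1 : 1 ≤ ε) (hε2 : (ε : ℤ) ≤ δ - 2)
    (hk : ∀ j, 2 ≤ k j) (hko : ∀ j, 1 ≤ ko j)
    (hkko : ∀ j, ko j + 2 * k j ≤ 2 * d + 1) :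
    δ - 1 ≤ (d - 1) * (2 * δ + 4 * (g - 1) - e) + τ
      - (∑ j, ko j) - 2 * (∑ j, k j) + 4 * ε ∧
    2 ≤ δ - 1 := by
  refine ⟨?_, by linarith⟩
  simpa only [Finset.card_fin] using stmt_10_general (s := Finset.univ) (by linarith) hg hτ
    (by simpa only [Finset.card_fin] using hε2) fun j _ => hkko j
end

section
/- Let $\zeta = e^{2\pi i/3} \in \mathbb{C}$, and consider the nine lines of the dual Hesse arrangement in $\mathbb{P}^2(\mathbb{C})$, namely the zero loci of the linear forms $x_1 - \zeta^k x_2$, $x_1 - \zeta^k x_3$, and $x_2 - \zeta^k x_3$ for $k = 0,1,2$ (the nine linear factors of $(x_1^3 - x_2^3)(x_1^3 - x_3^3)(x_2^3 - x_3^3)$). Then a point of $\mathbb{P}^2(\mathbb{C})$ lies on at least two of these nine lines if and only if it is one of the twelve points $[1:\zeta:\zeta]$, $[\zeta:\zeta^2:1]$, $[1:\zeta:1]$, $[\zeta:1:\zeta^2]$, $[\zeta:1:1]$, $[1:\zeta^2:1]$, $[1:1:\zeta]$, $[1:1:\zeta^2]$, $[1:1:1]$, $[0:1:0]$, $[1:0:0]$,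 $[0:0:1]$; moreover, each of these twelve points lies on exactly three of the nine lines. -/
/-- ζ = e^{2πi/3}, a primitive cube root of unity. -/
noncomputable def hesseZeta : ℂ := Complex.exp (2 * Real.pi * Complex.I / 3)

/-- Coefficient vectors of the nine lines of the dual Hesse arrangement: the
linear forms x₁ - ζᵏ x₂, x₁ - ζᵏ x₃ and x₂ - ζᵏ x₃ for k = 0,1,2, i.e. the nine
linear factors of (x₁³-x₂³)(x₁³-x₃³)(x₂³-x₃³). -/
noncomputable def hesseLine : Fin 9 → Fin 3 → ℂ :=
  ![![1, -1, 0], ![1, -hesseZeta, 0], ![1, -hesseZeta ^ 2, 0],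
    ![1, 0, -1], ![1, 0, -hesseZeta], ![1, 0, -hesseZeta ^ 2],
    ![0, 1, -1], ![0, 1, -hesseZeta], ![0, 1, -hesseZeta ^ 2]]

/-- A point of ℙ²(ℂ) lies on the i-th line of the dual Hesse arrangement if the
corresponding linear form vanishes on a (equivalently, any) representative. -/
def hesseOnLine (i : Fin 9) (p : Projectivization ℂ (Fin 3 → ℂ)) : Prop :=
  ∑ k, hesseLine i k * p.rep k = 0

/-- Homogeneous coordinates of the twelve triple points of the dual Hesse
arrangement. -/
noncomputable def hessePtVec : Fin 12 → Fin 3 → ℂ :=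
  ![![1, hesseZeta, hesseZeta], ![hesseZeta, hesseZeta ^ 2, 1], ![1, hesseZeta, 1],
    ![hesseZeta, 1, hesseZeta ^ 2], ![hesseZeta, 1, 1], ![1, hesseZeta ^ 2, 1],
    ![1, 1, hesseZeta], ![1, 1, hesseZeta ^ 2], ![1, 1, 1],
    ![0, 1, 0], ![1, 0, 0], ![0, 0, 1]]

lemma hessePtVec_ne_zero (j : Fin 12) : hessePtVec j ≠ 0 := by
  fin_cases j
  exacts [fun h => one_ne_zero (congrFun h 0),
          fun h => one_ne_zero (congrFun h 2),
          fun h => one_ne_zero (congrFun h 0),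
          fun h => one_ne_zero (congrFun h 1),
          fun h => one_ne_zero (congrFun h 1),
          fun h => one_ne_zero (congrFun h 0),
          fun h => one_ne_zero (congrFun h 0),
          fun h => one_ne_zero (congrFun h 0),
          fun h => one_ne_zero (congrFun h 0),
          fun h => one_ne_zero (congrFun h 1),
          fun h => one_ne_zero (congrFun h 0),
          fun h => one_ne_zero (congrFun h 2)]

/-- The twelve triple points of the dual Hesse arrangement, as points of
ℙ²(ℂ): [1:ζ:ζ], [ζ:ζ²:1], [1:ζ:1], [ζ:1:ζ²], [ζ:1:1], [1:ζ²:1], [1:1:ζ],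
[1:1:ζ²], [1:1:1], [0:1:0], [1:0:0], [0:0:1]. -/
noncomputable def hessePt (j : Fin 12) : Projectivization ℂ (Fin 3 → ℂ) :=
  Projectivization.mk ℂ (hessePtVec j) (hessePtVec_ne_zero j)

/-!
Every nonzero coordinate of the twelve points is a power of `ζ`, and each line has the form
`x_a = ζ ^ k * x_b`. An incidence between them is therefore an equality of exponents modulo `3`, and
the incidence relation becomes a finite decidable one. From it one reads off that each point lies on
exactly three lines, that the points separate the nine lines, and that any two of these lines share
one of the twelve points. As two distinct lines of a projective plane meet in a single point, there
are no other multiple points.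
-/

section RootOrZero

variable {M₀ : Type*} [CommMonoidWithZero M₀] {n : ℕ} {ζ : M₀}

/-- The elements of `{0} ∪ {ζ ^ e}` for a root of unity `ζ` of order `n`, labelled by their exponent
in `Fin n` (where addition is modulo `n`), with `none` labelling `0`. -/
def rootOrZero (ζ : M₀) : Option (Fin n) → M₀
  | none => 0
  | some e => ζ ^ e.val

lemma rootOrZero_injective [Nontrivial M₀] (hζ : IsPrimitiveRoot ζ n) :
    Function.Injective (rootOrZero ζ : Option (Fin n) → M₀) := by
  have pow_ne_zero (e : Fin n) : ζ ^ e.val ≠ 0 := ((hζ.isUnit e.pos.ne').pow _).ne_zero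
  rintro (_ | d) (_ | e) h
  · rfl
  · exact absurd h.symm (pow_ne_zero _)
  · exact absurd h (pow_ne_zero _)
  · exact congrArg some (Fin.ext (hζ.pow_inj d.isLt e.isLt h))

lemma rootOrZero_map_add (hζ : ζ ^ n = 1) (k : Fin n) (c : Option (Fin n)) :
    rootOrZero ζ (c.map (k + ·)) = ζ ^ k.val * rootOrZero ζ c := by
  cases c with
  | none => exact (mul_zero _).symm
  | some e => simp only [Option.map_some, rootOrZero, Fin.val_add, ← pow_add,
      ← pow_eq_pow_mod _ hζ]

end RootOrZero

lemma isPrimitiveRoot_hesseZeta : IsPrimitiveRoot hesseZeta 3 :=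
  Complex.isPrimitiveRoot_exp 3 three_ne_zero

/-- The triple `(a, b, k)` such that the `i`-th line is `x_a = ζ ^ k * x_b`, with coordinates
numbered from `0`. -/
def hesseLineData : Fin 9 → Fin 3 × Fin 3 × Fin 3 :=
  ![(0, 1, 0), (0, 1, 1), (0, 1, 2), (0, 2, 0), (0, 2, 1), (0, 2, 2), (1, 2, 0), (1, 2, 1),
    (1, 2, 2)]

/-- The coordinates of the twelve points, as labels for `rootOrZero hesseZeta`. -/
def hessePtLabel : Fin 12 → Fin 3 → Option (Fin 3) :=
  ![![some 0, some 1, some 1], ![some 1, some 2, some 0], ![some 0, some 1, some 0],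
    ![some 1, some 0, some 2], ![some 1, some 0, some 0], ![some 0, some 2, some 0],
    ![some 0, some 0, some 1], ![some 0, some 0, some 2], ![some 0, some 0, some 0],
    ![none, some 0, none], ![some 0, none, none], ![none, none, some 0]]

/-- The incidence relation between the nine lines and the twelve points, expressed on labels so that
it is decidable by computation. -/
abbrev HesseIncident (i : Fin 9) (j : Fin 12) : Prop :=
  let (a, b, k) := hesseLineData i
  hessePtLabel j a = (hessePtLabel j b).map (k + ·)

lemma hesseLine_dotProduct (i : Fin 9) (v : Fin 3 → ℂ) :
    hesseLine i ⬝ᵥ v = v (hesseLineData i).1 -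
      hesseZeta ^ (hesseLineData i).2.2.val * v (hesseLineData i).2.1 := by
  fin_cases i <;>
    simp [hesseLine, hesseLineData, dotProduct, Fin.sum_univ_three, sub_eq_add_neg]

lemma hessePtVec_eq_rootOrZero (j : Fin 12) (a : Fin 3) :
    hessePtVec j a = rootOrZero hesseZeta (hessePtLabel j a) := by
  fin_cases j <;> fin_cases a <;> simp [hessePtVec, hessePtLabel, rootOrZero]

lemma hesseLine_ne_zero (i : Fin 9) : hesseLine i ≠ 0 := by
  fin_cases i <;> simp [hesseLine]

lemma hesseOnLine_iff_orthogonal (i : Fin 9) (p : Projectivization ℂ (Fin 3 → ℂ)) :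
    hesseOnLine i p ↔ (Projectivization.mk ℂ (hesseLine i) (hesseLine_ne_zero i)).orthogonal p := by
  conv_rhs => rw [← p.mk_rep, Projectivization.orthogonal_mk]
  rfl

lemma hesseOnLine_hessePt_iff (i : Fin 9) (j : Fin 12) :
    hesseOnLine i (hessePt j) ↔ HesseIncident i j := by
  rw [hesseOnLine_iff_orthogonal, hessePt, Projectivization.orthogonal_mk, hesseLine_dotProduct,
    sub_eq_zero, hessePtVec_eq_rootOrZero, hessePtVec_eq_rootOrZero,
    ← rootOrZero_map_add isPrimitiveRoot_hesseZeta.pow_eq_one,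
    (rootOrZero_injective isPrimitiveRoot_hesseZeta).eq_iff]

lemma mk_hesseLine_injective :
    Function.Injective fun i => Projectivization.mk ℂ (hesseLine i) (hesseLine_ne_zero i) := by
  intro i i' h
  have same_points (j : Fin 12) : HesseIncident i j ↔ HesseIncident i' j := by
    dsimp only at h
    rw [← hesseOnLine_hessePt_iff, ← hesseOnLine_hessePt_iff, hesseOnLine_iff_orthogonal,
      hesseOnLine_iff_orthogonal, h]
  have separated : ∀ i i', (∀ j, HesseIncident i j ↔ HesseIncident i' j) → i = i' := by decide
  exact separated i i' same_points

lemma eq_of_hesseOnLine {i i' : Fin 9} (hne : i ≠ i') {p q : Projectivization ℂ (Fin 3 → ℂ)}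
    (hp : hesseOnLine i p) (hp' : hesseOnLine i' p) (hq : hesseOnLine i q)
    (hq' : hesseOnLine i' q) : p = q := by
  rw [hesseOnLine_iff_orthogonal] at hp hp' hq hq'
  exact (Configuration.ofField.eq_or_eq_of_orthogonal hp hp' hq hq').resolve_left
    (mk_hesseLine_injective.ne hne)

lemma exists_hessePt_on_two_lines (i i' : Fin 9) :
    ∃ j, hesseOnLine i (hessePt j) ∧ hesseOnLine i' (hessePt j) := by
  simp only [hesseOnLine_hessePt_iff]
  decide +revert

lemma ncard_hesseOnLine_hessePt (j : Fin 12) : {i | hesseOnLine i (hessePt j)}.ncard = 3 := by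
  simp only [hesseOnLine_hessePt_iff, Set.ncard_eq_toFinset_card', Set.toFinset_ofPred]
  decide +revert

/-- a point of ℙ²(ℂ) lies on at least two of the nine lines of
the dual Hesse arrangement if and only if it is one of the twelve listed
points; moreover each of these twelve points lies on exactly three of the nine
lines. -/
theorem stmt_11 :
    (∀ p : Projectivization ℂ (Fin 3 → ℂ),
      (∃ i j : Fin 9, i ≠ j ∧ hesseOnLine i p ∧ hesseOnLine j p) ↔
        ∃ j : Fin 12, p = hessePt j) ∧
    (∀ j : Fin 12, Set.ncard {i : Fin 9 | hesseOnLine i (hessePt j)} = 3) := by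
  refine ⟨fun p => ⟨?_, ?_⟩, ncard_hesseOnLine_hessePt⟩
  · rintro ⟨i, i', hne, hp, hp'⟩
    obtain ⟨j, hj, hj'⟩ := exists_hessePt_on_two_lines i i'
    exact ⟨j, eq_of_hesseOnLine hne hp hp' hj hj'⟩
  · rintro ⟨j, rfl⟩
    have two_lines : 1 < {i | hesseOnLine i (hessePt j)}.ncard := by
      rw [ncard_hesseOnLine_hessePt]
      norm_num
    obtain ⟨i, hi, i', hi', hne⟩ := (Set.one_lt_ncard).mp two_lines
    exact ⟨i, i', hne, hi, hi'⟩
end
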